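/- Fix t > 0 with t ≠ 2 and x ∈ ℝ, and let F_n'(x) denote the derivative in x of F_n(x) = Φ(g_n)^{n} − (1 − Φ(g_n))^{n} where g_n = (c_n x + d_n)^{1/t}, defined for n large enough that c_n x + d_n > 0. Then as n → ∞, F_n'(x) = Λ(x) e^{−x} ( 1 + b_n^{−2} ( ϖ + b_n^{−2} τ + O(b_n^{−4}) ) ), where ϖ = x(1 − t + ((t−2)/2) x) + e^{−x}(1 + x + ((2−t)/2) x²) and τ = x e^{−x}(1 − t + ((t−2)/2) x)(1 + x + ((2−t)/2) x²) + x² ( (1−t)(1−2t)/2 + (5(1−t)(t−2)/6) x + ((t−2)²/8) x² ) − e^{−x} ( 3 + 3x + (3/2) x² + ((2−t)(2t+1)/6) x³ + ((t−2)²/8) x⁴ − (e^{−x}/2)(1 + x + ((2−t)/2) x²)² ). -/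

import Mathlib

open Real Filter Topology

/-- The standard normal distribution function. -/
noncomputable def stdNormalCDF (x : ℝ) : ℝ :=
  ∫ u in Set.Iic x, Real.exp (-u ^ 2 / 2) / Real.sqrt (2 * Real.pi)

/-- The Gumbel distribution function `Λ(x) = exp(−e^{−x})`. -/
noncomputable def gumbel (x : ℝ) : ℝ := Real.exp (-Real.exp (-x))

open Asymptotics MeasureTheory

/-- `f` has the second order expansion `a0 + a1 h + a2 h^2 + O(h^3)`. -/
def E2 (h f : ℕ → ℝ) (a0 a1 a2 : ℝ) : Prop :=
  (fun n => f n - (a0 + a1 * h n + a2 * h n ^ 2)) =O[atTop] fun n => h n ^ 3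

section ecalc
variable {h f g : ℕ → ℝ} {a0 a1 a2 b0 b1 b2 : ℝ}

lemma h_bdd (hh : Tendsto h atTop (𝓝 0)) : h =O[atTop] (fun _ => (1 : ℝ)) :=
  hh.isBigO_one ℝ

lemma poly_bdd (hh : Tendsto h atTop (𝓝 0)) :
    (fun n => a0 + a1 * h n + a2 * h n ^ 2) =O[atTop] (fun _ => (1 : ℝ)) := by
  have : Tendsto (fun n => a0 + a1 * h n + a2 * h n ^ 2) atTop (𝓝 (a0 + a1 * 0 + a2 * 0 ^ 2)) :=
    ((hh.const_mul a1).const_add a0).add ((hh.pow 2).const_mul a2)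
  exact this.isBigO_one ℝ

lemma h3_bdd (hh : Tendsto h atTop (𝓝 0)) :
    (fun n => h n ^ 3) =O[atTop] (fun _ => (1 : ℝ)) := (hh.pow 3).isBigO_one ℝ

lemma E2.bdd (hh : Tendsto h atTop (𝓝 0)) (hf : E2 h f a0 a1 a2) :
    f =O[atTop] (fun _ => (1 : ℝ)) := by
  have := (IsBigO.trans hf (h3_bdd hh)).add (poly_bdd (a0 := a0) (a1 := a1) (a2 := a2) hh)
  simpa using this

lemma E2.add (hf : E2 h f a0 a1 a2) (hg : E2 h g b0 b1 b2) :
    E2 h (fun n => f n + g n) (a0 + b0) (a1 + b1) (a2 + b2) := by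
  refine (IsBigO.add hf hg).congr_left fun n => ?_
  ring

lemma E2.mul (hh : Tendsto h atTop (𝓝 0)) (hf : E2 h f a0 a1 a2) (hg : E2 h g b0 b1 b2) :
    E2 h (fun n => f n * g n) (a0 * b0) (a0 * b1 + a1 * b0) (a0 * b2 + a1 * b1 + a2 * b0) := by
  have h1 : (fun n => (f n - (a0 + a1 * h n + a2 * h n ^ 2)) * g n) =O[atTop]
      fun n => h n ^ 3 := by
    simpa using IsBigO.mul hf (hg.bdd hh)
  have h2 : (fun n => (a0 + a1 * h n + a2 * h n ^ 2) * (g n - (b0 + b1 * h n + b2 * h n ^ 2)))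
      =O[atTop] fun n => h n ^ 3 := by
    simpa using IsBigO.mul (poly_bdd (a0 := a0) (a1 := a1) (a2 := a2) hh) hg
  have h3 : (fun n => ((a1 * b2 + a2 * b1) + (a2 * b2) * h n + 0 * h n ^ 2) * h n ^ 3)
      =O[atTop] fun n => h n ^ 3 := by
    simpa using IsBigO.mul (poly_bdd (a0 := a1 * b2 + a2 * b1) (a1 := a2 * b2) (a2 := 0) hh)
      (isBigO_refl (fun n => h n ^ 3) atTop)
  refine ((h1.add h2).add h3).congr_left fun n => ?_
  ring

lemma E2.congr (hf : E2 h f a0 a1 a2) (hfg : (fun n => g n - f n) =O[atTop] fun n => h n ^ 3) :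
    E2 h g a0 a1 a2 := by
  refine (IsBigO.add hf hfg).congr_left fun n => ?_
  ring

lemma E2.congr_ev (hf : E2 h f a0 a1 a2) (hfg : ∀ᶠ n in atTop, g n = f n) :
    E2 h g a0 a1 a2 := by
  refine IsBigO.congr' hf ?_ EventuallyEq.rfl
  filter_upwards [hfg] with n hn
  rw [hn]

lemma E2.coef (hf : E2 h f a0 a1 a2) (e0 : b0 = a0) (e1 : b1 = a1) (e2 : b2 = a2) :
    E2 h f b0 b1 b2 := by subst e0 e1 e2; exact hf

lemma E2.const (k : ℝ) : E2 h (fun _ => k) k 0 0 := by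
  unfold E2
  simpa using isBigO_zero (fun n => h n ^ 3) atTop

lemma E2.hh : E2 h h 0 1 0 := by
  unfold E2
  simpa using isBigO_zero (fun n => h n ^ 3) atTop

lemma E2.const_mul (hh : Tendsto h atTop (𝓝 0)) (hf : E2 h f a0 a1 a2) (k : ℝ) :
    E2 h (fun n => k * f n) (k * a0) (k * a1) (k * a2) :=
  ((E2.const k).mul hh hf).coef rfl (by ring) (by ring)

lemma exp_taylor : (fun v : ℝ => Real.exp v - (1 + v + v ^ 2 / 2)) =O[𝓝 0] fun v => v ^ 3 := by
  refine IsBigO.of_bound 1 ?_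
  have : ∀ᶠ v : ℝ in 𝓝 0, |v| < 1 := by
    have := (continuous_abs (G := ℝ)).tendsto 0
    rw [abs_zero] at this
    exact this.eventually (gt_mem_nhds one_pos)
  filter_upwards [this] with v hv
  have := Real.exp_bound (x := v) hv.le (n := 3) (by norm_num)
  simp only [Finset.sum_range_succ, Finset.sum_range_zero, Nat.factorial] at this
  norm_num at this
  rw [Real.norm_eq_abs, Real.norm_eq_abs, abs_pow]
  refine this.trans ?_
  nlinarith [pow_nonneg (abs_nonneg v) 3]

lemma E2.exp0 (hh : Tendsto h atTop (𝓝 0)) (hf : E2 h f 0 a1 a2) :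
    E2 h (fun n => Real.exp (f n)) 1 a1 (a2 + a1 ^ 2 / 2) := by
  have hO : f =O[atTop] h := by
    have h1 : (fun n => h n ^ 3) =O[atTop] h := by
      have := IsBigO.mul ((hh.pow 2).isBigO_one ℝ) (isBigO_refl h atTop)
      refine this.congr (fun n => by ring) (fun n => by ring)
    have h2 : (fun n => (a1 + a2 * h n + 0 * h n ^ 2) * h n) =O[atTop] h := by
      simpa using IsBigO.mul (poly_bdd (a0 := a1) (a1 := a2) (a2 := 0) hh) (isBigO_refl h atTop)
    refine ((IsBigO.trans hf h1).add h2).congr_left fun n => ?_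
    ring
  have hf0 : Tendsto f atTop (𝓝 0) := hO.trans_tendsto hh
  have h1 := (exp_taylor.comp_tendsto hf0).trans (hO.pow 3)
  have h2 := ((E2.const 1).add hf).add ((hf.mul hh hf).const_mul hh (1 / 2))
  have h3 := h2.congr (g := fun n => Real.exp (f n)) (h1.congr_left fun n => by
    simp only [Function.comp]; ring)
  exact h3.coef (by ring) (by ring) (by ring)

lemma E2.exp (hh : Tendsto h atTop (𝓝 0)) (hf : E2 h f a0 a1 a2) :
    E2 h (fun n => Real.exp (f n)) (Real.exp a0) (Real.exp a0 * a1)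
      (Real.exp a0 * (a2 + a1 ^ 2 / 2)) := by
  have h1 := ((hf.add (E2.const (-a0))).coef (b0 := 0) (b1 := a1) (b2 := a2)
    (by ring) (by ring) (by ring)).exp0 hh
  refine ((h1.const_mul hh (Real.exp a0)).coef (by ring) rfl rfl).congr_ev
    (Eventually.of_forall fun n => ?_)
  rw [← Real.exp_add]; congr 1; ring

end ecalc

lemma isBigO_integrate {f f' : ℝ → ℝ} (k : ℕ) (hf : ∀ᶠ y in 𝓝 0, HasDerivAt f (f' y) y)
    (h0 : f 0 = 0) (hO : f' =O[𝓝 0] fun y => y ^ k) : f =O[𝓝 0] fun y => y ^ (k + 1) := by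
  obtain ⟨C, hC⟩ := hO.bound
  obtain ⟨ε, hε, hb⟩ := Metric.eventually_nhds_iff_ball.1 (hf.and hC)
  refine IsBigO.of_bound C ?_
  filter_upwards [Metric.ball_mem_nhds (0 : ℝ) hε] with y hy
  have hsub : ∀ z ∈ Metric.closedBall (0 : ℝ) |y|, z ∈ Metric.ball (0 : ℝ) ε := by
    intro z hz
    simp only [Metric.mem_closedBall, Metric.mem_ball, Real.dist_eq, sub_zero] at *
    linarith
  have hC0 : 0 ≤ C ∨ y = 0 := by
    by_contra! hcon
    have := (hb y hy).2
    have h2 : 0 < ‖y ^ k‖ := norm_pos_iff.2 (pow_ne_zero _ hcon.2)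
    nlinarith [norm_nonneg (f' y)]
  rcases hC0 with hC0 | rfl
  · have := (convex_closedBall (0 : ℝ) |y|).norm_image_sub_le_of_norm_hasDerivWithin_le
      (f := f) (f' := f') (C := C * |y| ^ k) (x := 0) (y := y)
      (fun z hz => (hb z (hsub z hz)).1.hasDerivWithinAt) (fun z hz => by
        refine (hb z (hsub z hz)).2.trans ?_
        rw [norm_pow, Real.norm_eq_abs]
        have : |z| ≤ |y| := by simpa using hz
        gcongr) (by simp) (by simp)
    rw [h0, sub_zero, sub_zero] at this
    rw [norm_pow, pow_succ, ← mul_assoc]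
    simpa using this
  · simp [h0]

lemma hasDeriv_one_add_rpow (a : ℝ) :
    ∀ᶠ y : ℝ in 𝓝 0, HasDerivAt (fun y : ℝ => (1 + y) ^ a) (a * (1 + y) ^ (a - 1)) y := by
  filter_upwards [lt_mem_nhds (show (-1 : ℝ) < 0 by norm_num)] with y hy
  have := ((hasDerivAt_id y).const_add 1).rpow_const (p := a) (Or.inl (by simp; linarith))
  simpa using this

lemma rpow_t0 (a : ℝ) : (fun y : ℝ => (1 + y) ^ a - 1) =O[𝓝 0] fun y => y ^ (0 + 1) := by
  refine isBigO_integrate 0 ((hasDeriv_one_add_rpow a).mono fun y hy => hy.sub_const 1) (by simp) ?_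
  have : ContinuousAt (fun y : ℝ => a * (1 + y) ^ (a - 1)) 0 := by
    refine ContinuousAt.mul continuousAt_const ?_
    exact ContinuousAt.rpow_const (by fun_prop) (Or.inl (by simp))
  simpa using this.tendsto.isBigO_one ℝ

lemma rpow_t1 (a : ℝ) :
    (fun y : ℝ => (1 + y) ^ a - (1 + a * y)) =O[𝓝 0] fun y => y ^ (1 + 1) := by
  refine isBigO_integrate (f' := fun y => a * ((1 + y) ^ (a - 1) - 1)) 1
    ((hasDeriv_one_add_rpow a).mono fun y hy => ?_) (by simp)
    ((rpow_t0 (a - 1)).const_mul_left a)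
  have := hy.sub (((hasDerivAt_id y).const_mul a).const_add 1)
  refine this.congr_deriv ?_
  ring

lemma rpow_t2 (a : ℝ) :
    (fun y : ℝ => (1 + y) ^ a - (1 + a * y + a * (a - 1) / 2 * y ^ 2))
      =O[𝓝 0] fun y => y ^ (2 + 1) := by
  refine isBigO_integrate (f' := fun y => a * ((1 + y) ^ (a - 1) - (1 + (a - 1) * y))) 2
    ((hasDeriv_one_add_rpow a).mono fun y hy => ?_) (by simp)
    ((rpow_t1 (a - 1)).const_mul_left a)
  have := hy.sub ((((hasDerivAt_id y).const_mul a).const_add 1).add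
    (((hasDerivAt_id y).pow 2).const_mul (a * (a - 1) / 2)))
  refine this.congr_deriv ?_
  simp; ring

lemma rpow_t3 (a : ℝ) :
    (fun y : ℝ => (1 + y) ^ a - (1 + a * y + a * (a - 1) / 2 * y ^ 2
      + a * (a - 1) * (a - 2) / 6 * y ^ 3))
      =O[𝓝 0] fun y => y ^ (3 + 1) := by
  refine isBigO_integrate (f' := fun y => a * ((1 + y) ^ (a - 1) -
      (1 + (a - 1) * y + (a - 1) * (a - 1 - 1) / 2 * y ^ 2))) 3
    ((hasDeriv_one_add_rpow a).mono fun y hy => ?_) (by simp)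
    ((rpow_t2 (a - 1)).const_mul_left a)
  have := hy.sub (((((hasDerivAt_id y).const_mul a).const_add 1).add
    (((hasDerivAt_id y).pow 2).const_mul (a * (a - 1) / 2))).add
    (((hasDerivAt_id y).pow 3).const_mul (a * (a - 1) * (a - 2) / 6)))
  refine this.congr_deriv ?_
  simp; ring

lemma E2.rpow {h : ℕ → ℝ} (hh : Tendsto h atTop (𝓝 0)) (s a : ℝ) :
    E2 h (fun n => (1 + s * h n) ^ a) 1 (a * s) (a * (a - 1) / 2 * s ^ 2) := by
  have hs : Tendsto (fun n => s * h n) atTop (𝓝 0) := by simpa using hh.const_mul s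
  have h1 := (rpow_t2 a).comp_tendsto hs
  have h2 : ((fun y : ℝ => y ^ (2 + 1)) ∘ fun n => s * h n) =O[atTop] fun n => h n ^ 3 := by
    refine ((isBigO_refl (fun n => h n ^ 3) atTop).const_mul_left (s ^ 3)).congr_left fun n => ?_
    simp; ring
  refine (h1.trans h2).congr_left fun n => ?_
  simp; ring

lemma E2.rpow_div {h : ℕ → ℝ} (hh : Tendsto h atTop (𝓝 0)) (hpos : ∀ᶠ n in atTop, 0 < h n)
    (s a : ℝ) :
    E2 h (fun n => ((1 + s * h n) ^ a - 1) / h n) (a * s) (a * (a - 1) / 2 * s ^ 2)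
      (a * (a - 1) * (a - 2) / 6 * s ^ 3) := by
  have hs : Tendsto (fun n => s * h n) atTop (𝓝 0) := by simpa using hh.const_mul s
  have h1 := (rpow_t3 a).comp_tendsto hs
  have h2 : ((fun y : ℝ => y ^ (3 + 1)) ∘ fun n => s * h n) =O[atTop] fun n => h n ^ 4 := by
    refine ((isBigO_refl (fun n => h n ^ 4) atTop).const_mul_left (s ^ 4)).congr_left fun n => ?_
    simp; ring
  have h3 := IsBigO.mul (h1.trans h2) (isBigO_refl (fun n => (h n)⁻¹) atTop)
  refine h3.congr' ?_ ?_
  · filter_upwards [hpos] with n hn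
    simp only [Function.comp]
    field_simp
    ring
  · filter_upwards [hpos] with n hn
    field_simp

/-- Standard normal density. -/
noncomputable def ph (u : ℝ) : ℝ := Real.exp (-u ^ 2 / 2) / Real.sqrt (2 * Real.pi)

lemma ph_eq (u : ℝ) : ph u = Real.exp (-(1 / 2) * u ^ 2) / Real.sqrt (2 * Real.pi) := by
  unfold ph; congr 2; ring

lemma ph_pos (u : ℝ) : 0 < ph u := by unfold ph; positivity

lemma ph_cont : Continuous ph := by
  unfold ph; fun_prop

lemma ph_integrable : Integrable ph := by
  have := (integrable_exp_neg_mul_sq (b := 1 / 2) (by norm_num)).div_const (Real.sqrt (2 * Real.pi))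
  exact this.congr (Eventually.of_forall fun u => (ph_eq u).symm)

lemma ph_integral : ∫ u, ph u = 1 := by
  simp_rw [ph_eq]
  rw [integral_div, integral_gaussian]
  rw [show π / (1 / 2) = 2 * π by ring]
  exact div_self (by positivity)

lemma cdf_eq (x : ℝ) : stdNormalCDF x = ∫ u in Set.Iic x, ph u := rfl

lemma cdf_tendsto : Tendsto stdNormalCDF atTop (𝓝 1) := by
  have := (aecover_Iic (μ := volume) (tendsto_id (α := ℝ) (x := atTop))
    ).integral_tendsto_of_countably_generated ph_integrable
  rw [ph_integral] at this
  exact this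

lemma cdf_hasDeriv (x : ℝ) : HasDerivAt stdNormalCDF (ph x) x := by
  have h1 : stdNormalCDF = fun y => stdNormalCDF 0 + ∫ u in (0 : ℝ)..y, ph u := by
    funext y
    rw [cdf_eq, cdf_eq, ← intervalIntegral.integral_Iic_sub_Iic ph_integrable.integrableOn
      ph_integrable.integrableOn]
    ring
  rw [h1]
  exact (intervalIntegral.integral_hasDerivAt_right (ph_cont.intervalIntegrable _ _)
    ph_cont.stronglyMeasurable.stronglyMeasurableAtFilter ph_cont.continuousAt).const_add _

lemma ph_hasDeriv (x : ℝ) : HasDerivAt ph (-x * ph x) x := by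
  have h1 : HasDerivAt (fun u : ℝ => -u ^ 2 / 2) (-x) x := by
    have := (((hasDerivAt_id x).pow 2).neg).div_const 2
    refine this.congr_deriv ?_
    simp
    ring
  have := (h1.exp).div_const (Real.sqrt (2 * Real.pi))
  refine this.congr_deriv ?_
  unfold ph; ring

lemma ph_le (x : ℝ) : ph x ≤ 1 := by
  unfold ph
  rw [div_le_one (by positivity)]
  have h1 : Real.exp (-x ^ 2 / 2) ≤ 1 := Real.exp_le_one_iff.2 (by nlinarith [sq_nonneg x])
  have h2 : (1 : ℝ) ≤ Real.sqrt (2 * Real.pi) := by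
    rw [Real.one_le_sqrt]; nlinarith [Real.pi_gt_three]
  linarith

lemma nonneg_of_deriv {f f' : ℝ → ℝ} (hf : ∀ y, 0 < y → HasDerivAt f (f' y) y)
    (hf' : ∀ y, 0 < y → f' y ≤ 0) (hlim : Tendsto f atTop (𝓝 0)) {y : ℝ} (hy : 0 < y) :
    0 ≤ f y := by
  have hanti : AntitoneOn f (Set.Ioi 0) := by
    refine antitoneOn_of_deriv_nonpos (convex_Ioi 0)
      (fun z hz => (hf z hz).continuousAt.continuousWithinAt) ?_ ?_
    · rw [interior_Ioi]
      exact fun z hz => (hf z hz).differentiableAt.differentiableWithinAt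
    · rw [interior_Ioi]
      intro z hz
      rw [(hf z hz).deriv]; exact hf' z hz
  refine le_of_tendsto hlim ?_
  filter_upwards [eventually_ge_atTop y] with z hz
  exact hanti hy (hy.trans_le hz) hz

lemma inv_pow_hasDeriv {y : ℝ} (hy : y ≠ 0) (k : ℕ) :
    HasDerivAt (fun z : ℝ => z⁻¹ ^ (k + 1)) (-(k + 1) * y⁻¹ ^ (k + 2)) y := by
  have := (hasDerivAt_inv hy).pow (k + 1)
  refine this.congr_deriv ?_
  push_cast
  simp
  ring

lemma mills_tendsto (a b c d : ℝ) : Tendsto (fun y : ℝ =>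
    ph y * (a * y⁻¹ ^ 1 + b * y⁻¹ ^ 3 + c * y⁻¹ ^ 5 + d * y⁻¹ ^ 7)) atTop (𝓝 0) := by
  have hi : Tendsto (fun y : ℝ => y⁻¹) atTop (𝓝 0) := tendsto_inv_atTop_zero
  have h1 : Tendsto (fun y : ℝ => a * y⁻¹ ^ 1 + b * y⁻¹ ^ 3 + c * y⁻¹ ^ 5 + d * y⁻¹ ^ 7) atTop
      (𝓝 (a * 0 ^ 1 + b * 0 ^ 3 + c * 0 ^ 5 + d * 0 ^ 7)) :=
    ((((hi.pow 1).const_mul a).add ((hi.pow 3).const_mul b)).add ((hi.pow 5).const_mul c)).add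
      ((hi.pow 7).const_mul d)
  have h2 : IsBoundedUnder (· ≤ ·) atTop (fun y => ‖ph y‖) :=
    isBoundedUnder_of ⟨1, fun y => by
      rw [Real.norm_eq_abs, abs_of_pos (ph_pos y)]; exact ph_le y⟩
  norm_num at h1
  exact (h1.zero_mul_isBoundedUnder_le h2).congr fun y => by norm_num [mul_comm]

lemma mills_deriv (a b c d : ℝ) {y : ℝ} (hy : 0 < y) : HasDerivAt (fun y : ℝ =>
    ph y * (a * y⁻¹ ^ 1 + b * y⁻¹ ^ 3 + c * y⁻¹ ^ 5 + d * y⁻¹ ^ 7))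
    (-ph y * (a + (a + b) * y⁻¹ ^ 2 + (3 * b + c) * y⁻¹ ^ 4 + (5 * c + d) * y⁻¹ ^ 6
      + 7 * d * y⁻¹ ^ 8)) y := by
  have hR := ((((inv_pow_hasDeriv hy.ne' 0).const_mul a).add
    ((inv_pow_hasDeriv hy.ne' 2).const_mul b)).add
    ((inv_pow_hasDeriv hy.ne' 4).const_mul c)).add ((inv_pow_hasDeriv hy.ne' 6).const_mul d)
  refine ((ph_hasDeriv y).mul hR).congr_deriv ?_
  simp
  field_simp
  ring

lemma mills_upper {y : ℝ} (hy : 0 < y) :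
    1 - stdNormalCDF y ≤ ph y * (1 * y⁻¹ ^ 1 + (-1) * y⁻¹ ^ 3 + 3 * y⁻¹ ^ 5 + 0 * y⁻¹ ^ 7) := by
  have := nonneg_of_deriv
    (f := fun y => ph y * (1 * y⁻¹ ^ 1 + (-1) * y⁻¹ ^ 3 + 3 * y⁻¹ ^ 5 + 0 * y⁻¹ ^ 7)
      + (stdNormalCDF y - 1))
    (fun z hz => (mills_deriv 1 (-1) 3 0 hz).add ((cdf_hasDeriv z).sub_const 1))
    (fun z hz => by
      have h1 := ph_pos z
      have h2 : 0 < z⁻¹ := inv_pos.2 hz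
      have : 0 < ph z * (15 * z⁻¹ ^ 6) := by positivity
      ring_nf at this ⊢
      linarith)
    (by simpa using (mills_tendsto 1 (-1) 3 0).add (cdf_tendsto.sub_const 1)) hy
  linarith

lemma mills_lower {y : ℝ} (hy : 0 < y) :
    ph y * (1 * y⁻¹ ^ 1 + (-1) * y⁻¹ ^ 3 + 3 * y⁻¹ ^ 5 + (-15) * y⁻¹ ^ 7) ≤ 1 - stdNormalCDF y := by
  have := nonneg_of_deriv
    (f := fun y => (1 - stdNormalCDF y) -
      ph y * (1 * y⁻¹ ^ 1 + (-1) * y⁻¹ ^ 3 + 3 * y⁻¹ ^ 5 + (-15) * y⁻¹ ^ 7))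
    (fun z hz => ((cdf_hasDeriv z).const_sub 1).sub (mills_deriv 1 (-1) 3 (-15) hz))
    (fun z hz => by
      have h1 := ph_pos z
      have h2 : 0 < z⁻¹ := inv_pos.2 hz
      have : 0 < ph z * (105 * z⁻¹ ^ 8) := by positivity
      ring_nf at this ⊢
      linarith)
    (by simpa using (cdf_tendsto.const_sub 1).sub (mills_tendsto 1 (-1) 3 (-15))) hy
  linarith

lemma cdf_lt_one (y : ℝ) : stdNormalCDF y ≤ 1 := by
  have hm : Monotone stdNormalCDF := monotone_of_deriv_nonneg
    (fun z => (cdf_hasDeriv z).differentiableAt)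
    (fun z => by rw [(cdf_hasDeriv z).deriv]; exact (ph_pos z).le)
  exact hm.ge_of_tendsto cdf_tendsto y

lemma mills {y : ℝ} (hy : 0 < y) :
    |(1 - stdNormalCDF y) - ph y * y⁻¹ * (1 - y⁻¹ ^ 2 + 3 * y⁻¹ ^ 4)|
      ≤ ph y * y⁻¹ * (15 * y⁻¹ ^ 6) := by
  have h1 := mills_upper hy
  have h2 := mills_lower hy
  have h3 : 0 ≤ ph y * y⁻¹ * (15 * y⁻¹ ^ 6) := by
    have := ph_pos y
    positivity
  rw [abs_le]
  constructor <;> ring_nf at * <;> linarith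

lemma pow_part {h q : ℕ → ℝ} {q0 q1 q2 : ℝ} (hh : Tendsto h atTop (𝓝 0))
    (hn : (fun n : ℕ => ((n : ℝ))⁻¹) =O[atTop] fun n => h n ^ 3)
    (hq0 : ∀ n, 0 ≤ q n) (hQ : E2 h (fun n => n * q n) q0 q1 q2) :
    E2 h (fun n => (1 - q n) ^ (n - 1)) (Real.exp (-q0)) (Real.exp (-q0) * (-q1))
      (Real.exp (-q0) * (-q2 + q1 ^ 2 / 2)) ∧
    (fun n => q n ^ (n - 1)) =O[atTop] fun n => h n ^ 3 := by
  have hqn : q =O[atTop] fun n : ℕ => ((n : ℝ))⁻¹ := by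
    have := IsBigO.mul (hQ.bdd hh) (isBigO_refl (fun n : ℕ => ((n : ℝ))⁻¹) atTop)
    refine this.congr' ?_ (Eventually.of_forall fun n => by simp)
    filter_upwards [eventually_ge_atTop 1] with n hn
    have : (n : ℝ) ≠ 0 := by positivity
    field_simp
  have hqh := hqn.trans hn
  have hqt : Tendsto q atTop (𝓝 0) := hqn.trans_tendsto tendsto_inv_atTop_nhds_zero_nat
  have hsmall : ∀ᶠ n in atTop, q n ≤ 1 / 2 :=
    (hqt.eventually (gt_mem_nhds (show (0 : ℝ) < 1 / 2 by norm_num))).mono fun n h => h.le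
  constructor
  · have hr : (fun n : ℕ => ((n : ℝ) - 1) * (Real.log (1 - q n) + q n)) =O[atTop]
        fun n => h n ^ 3 := by
      have h1 : (fun n : ℕ => (n * q n) * q n) =O[atTop] fun n => h n ^ 3 := by
        simpa using IsBigO.mul (hQ.bdd hh) hqh
      refine IsBigO.trans (IsBigO.of_bound 2 ?_) h1
      filter_upwards [hsmall, eventually_ge_atTop 1] with n hs hn
      have hq := hq0 n
      have hl := Real.abs_log_sub_add_sum_range_le (x := q n)
        (by rw [abs_of_nonneg hq]; linarith) 1
      simp only [Finset.sum_range_one] at hl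
      norm_num at hl
      rw [abs_of_nonneg hq] at hl
      have hl2 : q n ^ 2 / (1 - q n) ≤ 2 * q n ^ 2 := by
        rw [div_le_iff₀ (by linarith)]
        nlinarith [sq_nonneg (q n)]
      have hn1 : (1 : ℝ) ≤ n := by exact_mod_cast hn
      rw [Real.norm_eq_abs, Real.norm_eq_abs, abs_mul, abs_of_nonneg (by linarith : 0 ≤ (n : ℝ) - 1),
        abs_of_nonneg (by positivity : 0 ≤ n * q n * q n), add_comm (Real.log _)]
      calc ((n : ℝ) - 1) * |q n + Real.log (1 - q n)| ≤ n * (2 * q n ^ 2) := by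
            apply mul_le_mul (by linarith) (hl.trans hl2) (abs_nonneg _) (by linarith)
        _ = _ := by ring
    have hE : E2 h (fun n : ℕ => ((n : ℝ) - 1) * Real.log (1 - q n)) (-q0) (-q1) (-q2) := by
      have h1 := hQ.const_mul hh (-1)
      have h2 := h1.congr (g := fun n : ℕ => ((n : ℝ) - 1) * Real.log (1 - q n)) (by
        refine (hr.add hqh).congr_left fun n => ?_
        ring)
      exact h2.coef (by ring) (by ring) (by ring)
    refine ((hE.exp hh).congr_ev ?_).coef rfl rfl (by ring)
    filter_upwards [hsmall, eventually_ge_atTop 1] with n hs hn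
    have : ((n : ℝ) - 1) = ((n - 1 : ℕ) : ℝ) := by push_cast [hn]; ring
    rw [this, Real.exp_nat_mul, Real.exp_log (by linarith)]
  · refine IsBigO.trans (IsBigO.of_bound 1 ?_) hqh
    filter_upwards [hsmall, eventually_ge_atTop 2] with n hs hn
    have hq := hq0 n
    rw [Real.norm_eq_abs, Real.norm_eq_abs, abs_of_nonneg hq, abs_of_nonneg (by positivity), one_mul]
    exact pow_le_of_le_one hq (by linarith) (by omega)

lemma b_tendsto {b : ℕ → ℝ} (hb : ∀ n : ℕ, 1 ≤ n → 0 < b n ∧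
      2 * Real.pi * (b n) ^ 2 * Real.exp ((b n) ^ 2) = (n : ℝ) ^ 2) : Tendsto b atTop atTop := by
  refine tendsto_atTop.2 fun M => ?_
  have := (tendsto_natCast_atTop_atTop (R := ℝ)).eventually_gt_atTop
    (2 * Real.pi * M ^ 2 * Real.exp (M ^ 2))
  filter_upwards [this, eventually_ge_atTop 1] with n hn hn1
  by_contra! hlt
  obtain ⟨h1, h2⟩ := hb n hn1
  have h3 : (b n) ^ 2 ≤ M ^ 2 := by gcongr
  have h4 : 2 * Real.pi * (b n) ^ 2 * Real.exp ((b n) ^ 2)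
      ≤ 2 * Real.pi * M ^ 2 * Real.exp (M ^ 2) := by gcongr
  have h5 : (1 : ℝ) ≤ n := by exact_mod_cast hn1
  nlinarith

lemma n_eq {b : ℕ → ℝ} (hb : ∀ n : ℕ, 1 ≤ n → 0 < b n ∧
      2 * Real.pi * (b n) ^ 2 * Real.exp ((b n) ^ 2) = (n : ℝ) ^ 2) {n : ℕ} (hn : 1 ≤ n) :
    (n : ℝ) = Real.sqrt (2 * Real.pi) * b n * Real.exp ((b n) ^ 2 / 2) := by
  obtain ⟨h1, h2⟩ := hb n hn
  have h3 : (n : ℝ) ^ 2 = (Real.sqrt (2 * Real.pi) * b n * Real.exp ((b n) ^ 2 / 2)) ^ 2 := by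
    rw [← h2, mul_pow, mul_pow, Real.sq_sqrt (by positivity), ← Real.exp_nat_mul]
    congr 2; push_cast; ring
  exact (pow_left_inj₀ (by positivity) (by positivity) two_ne_zero).1 h3

lemma h_tendsto {b : ℕ → ℝ} (hb : ∀ n : ℕ, 1 ≤ n → 0 < b n ∧
      2 * Real.pi * (b n) ^ 2 * Real.exp ((b n) ^ 2) = (n : ℝ) ^ 2) : Tendsto (fun n => ((b n) ^ 2)⁻¹) atTop (𝓝 0) :=
  tendsto_inv_atTop_zero.comp ((tendsto_pow_atTop two_ne_zero).comp (b_tendsto hb))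

lemma ninv {b : ℕ → ℝ} (hb : ∀ n : ℕ, 1 ≤ n → 0 < b n ∧
      2 * Real.pi * (b n) ^ 2 * Real.exp ((b n) ^ 2) = (n : ℝ) ^ 2) : (fun n : ℕ => ((n : ℝ))⁻¹) =O[atTop] fun n => (((b n) ^ 2)⁻¹) ^ 3 := by
  refine IsBigO.of_bound 11 ?_
  filter_upwards [eventually_ge_atTop 1] with n hn
  obtain ⟨h1, h2⟩ := hb n hn
  have hn0 : (0 : ℝ) < n := by exact_mod_cast hn
  rw [Real.norm_eq_abs, Real.norm_eq_abs, abs_of_pos (by positivity), abs_of_pos (by positivity)]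
  have h3 : ((b n) ^ 2) ^ 5 / 120 ≤ Real.exp ((b n) ^ 2) := by
    have := Real.pow_div_factorial_le_exp ((b n) ^ 2) (by positivity) 5
    norm_num [Nat.factorial] at this
    exact this
  have h4 : ((b n) ^ 6) ^ 2 ≤ (11 * (n : ℝ)) ^ 2 := by
    rw [mul_pow, ← h2]
    have h5 : 6 * (b n) ^ 2 * (((b n) ^ 2) ^ 5 / 120)
        ≤ 2 * Real.pi * (b n) ^ 2 * Real.exp ((b n) ^ 2) := by
      gcongr
      nlinarith [Real.pi_gt_three]
    have h6 : 0 ≤ (b n) ^ 12 := by positivity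
    nlinarith
  have h7 := (pow_le_pow_iff_left₀ (by positivity) (by positivity) two_ne_zero).1 h4
  rw [← inv_pow, ← pow_mul]
  norm_num
  rw [inv_le_iff_one_le_mul₀ hn0, ← div_eq_mul_inv, div_mul_eq_mul_div, le_div_iff₀ (by positivity)]
  linarith

lemma g_eq {b t u : ℝ} (hb : 0 < b) (ht : 0 < t) (hu : 0 < u) :
    (b ^ t * u) ^ (1 / t) = b * u ^ (1 / t) := by
  rw [Real.mul_rpow (by positivity) hu.le, ← Real.rpow_mul hb.le, mul_one_div_cancel ht.ne',
    Real.rpow_one]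

lemma g_deriv {b t u x c d : ℝ} (hb : 0 < b) (ht : 0 < t) (hu : 0 < u)
    (hc : c = t * b ^ (t - 2)) (hcd : c * x + d = b ^ t * u) :
    HasDerivAt (fun y => (c * y + d) ^ (1 / t)) (b⁻¹ * u ^ (1 / t - 1)) x := by
  have h1 : HasDerivAt (fun y => c * y + d) c x := by
    simpa using ((hasDerivAt_id x).const_mul c).add_const d
  have hpos : 0 < b ^ t * u := by positivity
  refine (h1.rpow_const (p := 1 / t) (Or.inl (by rw [hcd]; exact hpos.ne'))).congr_deriv ?_
  rw [hcd, Real.mul_rpow (by positivity) hu.le, ← Real.rpow_mul hb.le, hc]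
  have h2 : b ^ (t - 2) * b ^ (t * (1 / t - 1)) = b⁻¹ := by
    rw [← Real.rpow_add hb, ← Real.rpow_neg_one]
    congr 1; field_simp; ring
  rw [← h2]
  field_simp

lemma F_deriv {b t u x c d : ℝ} (hb : 0 < b) (ht : 0 < t) (hu : 0 < u) (n : ℕ)
    (hc : c = t * b ^ (t - 2)) (hcd : c * x + d = b ^ t * u) :
    deriv (fun y : ℝ =>
          stdNormalCDF ((c * y + d) ^ (1 / t)) ^ n -
            (1 - stdNormalCDF ((c * y + d) ^ (1 / t))) ^ n) x =
    (n * ph (b * u ^ (1 / t)) * b⁻¹) * u ^ (1 / t - 1) *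
      ((1 - (1 - stdNormalCDF (b * u ^ (1 / t)))) ^ (n - 1) +
        (1 - stdNormalCDF (b * u ^ (1 / t))) ^ (n - 1)) := by
  have h1 := g_deriv hb ht hu hc hcd
  have h2 := (cdf_hasDeriv ((c * x + d) ^ (1 / t))).comp x h1
  have h3 := ((h2.pow n).sub ((h2.const_sub 1).pow n)).deriv
  refine Eq.trans h3 ?_
  simp only [Function.comp]
  rw [hcd, g_eq hb ht hu]
  ring

lemma nph {b n w g : ℝ} (hn : n = Real.sqrt (2 * Real.pi) * b * Real.exp (b ^ 2 / 2))
    (hb : 0 < b) (hg : g ^ 2 = b ^ 2 * w) :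
    n * ph g * b⁻¹ = Real.exp (-1 / 2 * ((w - 1) / (b ^ 2)⁻¹)) := by
  have : (w - 1) / (b ^ 2)⁻¹ = b ^ 2 * (w - 1) := by field_simp
  rw [this, hn, ph, hg]
  have h2 : Real.sqrt (2 * Real.pi) ≠ 0 := by positivity
  field_simp
  rw [← Real.exp_add]
  congr 1
  ring

/-- Theorem 2.2, `t ≠ 2`: With `b_n` the unique positive solution of
`2π b_n² exp(b_n²) = n²`, `c_n = t b_n^{t−2}`, `d_n = b_n^t` (for `t > 0`, `t ≠ 2`) and
`F_n(y) = Φ((c_n y + d_n)^{1/t})^n − (1 − Φ((c_n y + d_n)^{1/t}))^n`: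
`F_n'(x) = Λ(x) e^{−x}(1 + b_n^{−2}(ϖ + b_n^{−2} τ + O(b_n^{−4})))`, where
`ϖ = x(1 − t + ((t−2)/2)x) + e^{−x}(1 + x + ((2−t)/2)x²)` and
`τ = x e^{−x}(1 − t + ((t−2)/2)x)(1 + x + ((2−t)/2)x²)
  + x²((1−t)(1−2t)/2 + (5(1−t)(t−2)/6)x + ((t−2)²/8)x²)
  − e^{−x}(3 + 3x + (3/2)x² + ((2−t)(2t+1)/6)x³ + ((t−2)²/8)x⁴
  − (e^{−x}/2)(1 + x + ((2−t)/2)x²)²)`. -/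
theorem powered_extremes_density_higher_order_expansion_t_ne_two
    (b : ℕ → ℝ)
    (hb : ∀ n : ℕ, 1 ≤ n → 0 < b n ∧
      2 * Real.pi * (b n) ^ 2 * Real.exp ((b n) ^ 2) = (n : ℝ) ^ 2)
    (t : ℝ) (ht : 0 < t) (ht2 : t ≠ 2) (x : ℝ)
    (c d : ℕ → ℝ)
    (hc : ∀ n : ℕ, c n = t * b n ^ (t - 2))
    (hd : ∀ n : ℕ, d n = b n ^ t) :
    ∃ C > (0 : ℝ), ∃ N : ℕ, ∀ n : ℕ, N ≤ n →
      0 < c n * x + d n ∧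
      |deriv (fun y : ℝ =>
          stdNormalCDF ((c n * y + d n) ^ (1 / t)) ^ n -
            (1 - stdNormalCDF ((c n * y + d n) ^ (1 / t))) ^ n) x -
        gumbel x * Real.exp (-x) *
          (1 + (x * (1 - t + (t - 2) / 2 * x) +
              Real.exp (-x) * (1 + x + (2 - t) / 2 * x ^ 2)) / (b n) ^ 2 +
            (x * Real.exp (-x) * (1 - t + (t - 2) / 2 * x) *
                (1 + x + (2 - t) / 2 * x ^ 2) +
              x ^ 2 * ((1 - t) * (1 - 2 * t) / 2 + 5 * (1 - t) * (t - 2) / 6 * x +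
                (t - 2) ^ 2 / 8 * x ^ 2) -
              Real.exp (-x) *
                (3 + 3 * x + 3 / 2 * x ^ 2 + (2 - t) * (2 * t + 1) / 6 * x ^ 3 +
                  (t - 2) ^ 2 / 8 * x ^ 4 -
                  Real.exp (-x) / 2 * (1 + x + (2 - t) / 2 * x ^ 2) ^ 2)) / (b n) ^ 4)|
      ≤ C / (b n) ^ 6 := by
  have hh := h_tendsto hb
  set h : ℕ → ℝ := fun n => ((b n) ^ 2)⁻¹ with hdef
  have hbpos : ∀ᶠ n in atTop, 0 < b n := by
    filter_upwards [eventually_ge_atTop 1] with n hn using (hb n hn).1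
  have hpos : ∀ᶠ n in atTop, 0 < h n := by
    filter_upwards [hbpos] with n hn
    simp only [hdef]; positivity
  set u : ℕ → ℝ := fun n => 1 + t * x * h n with udef
  have hut : Tendsto u atTop (𝓝 1) := by
    simpa using (hh.const_mul (t * x)).const_add 1
  have hu : ∀ᶠ n in atTop, 0 < u n := hut.eventually (lt_mem_nhds one_pos)
  set g : ℕ → ℝ := fun n => b n * u n ^ (1 / t) with gdef
  set q : ℕ → ℝ := fun n => 1 - stdNormalCDF (g n) with qdef
  have hq0 : ∀ n, 0 ≤ q n := fun n => sub_nonneg.2 (cdf_lt_one _)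
  -- expansions of the elementary pieces
  have eG : E2 h (fun n => Real.exp (-1 / 2 * ((u n ^ (2 / t) - 1) / h n)))
      (Real.exp (-x)) (Real.exp (-x) * (-((2 - t) / 2 * x ^ 2)))
      (Real.exp (-x) * (-((2 - t) * (1 - t) / 3 * x ^ 3) + (-((2 - t) / 2 * x ^ 2)) ^ 2 / 2)) := by
    have h1 := (E2.rpow_div hh hpos (t * x) (2 / t)).const_mul hh (-1 / 2)
    refine (h1.coef ?_ ?_ ?_).exp hh <;> field_simp <;> ring
  have eA : E2 h (fun n => u n ^ (1 / t - 1)) 1 ((1 - t) * x) ((1 - t) * (1 - 2 * t) / 2 * x ^ 2) := by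
    refine (E2.rpow hh (t * x) (1 / t - 1)).coef rfl ?_ ?_ <;> field_simp <;> ring
  have eB : E2 h (fun n => u n ^ (-(1 / t))) 1 (-x) ((1 + t) / 2 * x ^ 2) := by
    refine (E2.rpow hh (t * x) (-(1 / t))).coef rfl ?_ ?_ <;> field_simp <;> ring
  have eR : E2 h (fun n => h n * u n ^ (-(2 / t))) 0 1 (-2 * x) := by
    refine (E2.mul hh E2.hh (E2.rpow hh (t * x) (-(2 / t)))).coef ?_ ?_ ?_ <;> field_simp <;> ring
  have eM := eG.mul hh eB
  have eP := ((E2.const 1).add (eR.const_mul hh (-1))).add ((eR.mul hh eR).const_mul hh 3)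
  have eQ' := eM.mul hh eP
  have hnph : ∀ᶠ n : ℕ in atTop, (n : ℝ) * ph (g n) * (b n)⁻¹ =
      Real.exp (-1 / 2 * ((u n ^ (2 / t) - 1) / h n)) := by
    filter_upwards [hbpos, hu, eventually_ge_atTop 1] with n h1 h2 h3
    refine nph (n_eq hb h3) h1 ?_
    simp only [gdef]
    rw [mul_pow, ← Real.rpow_natCast (u n ^ (1 / t)), ← Real.rpow_mul h2.le]
    congr 2; push_cast; ring
  have eQ := eQ'.congr (g := fun n : ℕ => (n : ℝ) * q n) (by
    have hbd : (fun n => (Real.exp (-1 / 2 * ((u n ^ (2 / t) - 1) / h n)) * u n ^ (-(1 / t)))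
        * (15 * (h n * u n ^ (-(2 / t))) ^ 3)) =O[atTop] fun n => h n ^ 3 := by
      have hr : (fun n => h n * u n ^ (-(2 / t))) =O[atTop] h := by
        simpa using IsBigO.mul (isBigO_refl h atTop) ((E2.rpow hh (t * x) (-(2 / t))).bdd hh)
      simpa using IsBigO.mul (eM.bdd hh) ((hr.pow 3).const_mul_left 15)
    refine IsBigO.trans (IsBigO.of_bound 1 ?_) hbd
    filter_upwards [hbpos, hu, hnph, eventually_ge_atTop 1] with n h1 h2 h3 h4
    have hg : 0 < g n := by simp only [gdef]; positivity
    have hm := mills hg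
    have hn0 : (0 : ℝ) < n := by exact_mod_cast h4
    have e1 : (g n)⁻¹ = (b n)⁻¹ * u n ^ (-(1 / t)) := by
      simp only [gdef]
      rw [mul_inv, Real.rpow_neg h2.le]
    have e2 : (g n)⁻¹ ^ 2 = h n * u n ^ (-(2 / t)) := by
      rw [e1, mul_pow, ← Real.rpow_natCast (u n ^ (-(1 / t))), ← Real.rpow_mul h2.le]
      simp only [hdef]
      rw [inv_pow]
      congr 2; push_cast; ring
    have e3 : (n : ℝ) * (ph (g n) * (g n)⁻¹) =
        Real.exp (-1 / 2 * ((u n ^ (2 / t) - 1) / h n)) * u n ^ (-(1 / t)) := by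
      rw [← h3, e1]; ring
    rw [show (g n)⁻¹ ^ 4 = ((g n)⁻¹ ^ 2) ^ 2 by ring, show (g n)⁻¹ ^ 6 = ((g n)⁻¹ ^ 2) ^ 3 by ring,
      e2] at hm
    have hm2 := mul_le_mul_of_nonneg_left hm hn0.le
    rw [← abs_of_pos hn0, ← abs_mul, abs_of_pos hn0, ← mul_assoc, e3, mul_sub, ← mul_assoc (n : ℝ),
      e3] at hm2
    rw [one_mul, Real.norm_eq_abs, Real.norm_eq_abs]
    refine le_trans (le_of_eq ?_) (hm2.trans (le_abs_self _))
    congr 1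
    simp only [qdef]
    ring)
  obtain ⟨eF, hsm⟩ := pow_part hh (ninv hb) hq0 (eQ.coef (b0 := Real.exp (-x)) (by ring) rfl rfl)
  have eS := (eG.mul hh eA).mul hh (eF.congr (g := fun n => (1 - q n) ^ (n - 1) + q n ^ (n - 1))
    (hsm.congr_left fun n => by ring))
  have hcd : ∀ᶠ n in atTop, c n * x + d n = b n ^ t * u n := by
    filter_upwards [hbpos] with n h1
    rw [hc, hd, Real.rpow_sub h1]
    simp only [udef, hdef, Real.rpow_two]
    field_simp
    ring
  have eD := eS.congr_ev (g := fun n => deriv (fun y : ℝ =>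
          stdNormalCDF ((c n * y + d n) ^ (1 / t)) ^ n -
            (1 - stdNormalCDF ((c n * y + d n) ^ (1 / t))) ^ n) x) (by
    filter_upwards [hbpos, hu, hnph, hcd] with n h1 h2 h3 h4
    rw [F_deriv h1 ht h2 n (hc n) h4, ← h3])
  obtain ⟨C, hC⟩ := IsBigO.bound eD
  have hfin : ∀ᶠ n in atTop, 0 < c n * x + d n := by
    filter_upwards [hcd, hbpos, hu] with n h1 h2 h3
    rw [h1]; positivity
  obtain ⟨N, hN⟩ := eventually_atTop.1 ((hfin.and hC).and hbpos)
  refine ⟨max C 1, by positivity, N, fun n hn => ?_⟩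
  obtain ⟨⟨h1, h2⟩, h3⟩ := hN n hn
  refine ⟨h1, ?_⟩
  have h4 : ‖h n ^ 3‖ = 1 / b n ^ 6 := by
    rw [Real.norm_eq_abs, abs_of_nonneg (by simp only [hdef]; positivity)]
    simp only [hdef]; field_simp
  rw [h4] at h2
  have h5 : C * (1 / b n ^ 6) ≤ max C 1 / b n ^ 6 := by
    rw [mul_one_div]; gcongr; exact le_max_left _ _
  refine le_trans (le_of_eq ?_) (h2.trans h5)
  rw [Real.norm_eq_abs]
  congr 1
  congr 1
  simp only [gumbel, hdef]
  generalize Real.exp (-Real.exp (-x)) = G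
  generalize Real.exp (-x) = L
  field_simp
  ring
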